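/- Let T be an equilateral triangle in the plane. There exists ε₀ ≥ π/180 such that for every ε with 0 < ε < ε₀ and every natural number n, h(n, T, ε) = h(n). In particular, when n is a power of 3, h(n, T, ε) = (n³ − n)/24. -/

import Mathlib

open EuclideanGeometry

noncomputable section

abbrev Plane := EuclideanSpace ℝ (Fin 2)

/-- A triple of points is a (non-degenerate) triangle if its points are not collinear. -/
def IsTriangle (p : Fin 3 → Plane) : Prop := ¬ Collinear ℝ (Set.range p)

/-- The angle of the triple `p` at its `i`-th vertex. -/
noncomputable def triAngle (p : Fin 3 → Plane) (i : Fin 3) : ℝ :=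
  EuclideanGeometry.angle (p (i + 1)) (p i) (p (i + 2))

/-- `p` is ε-similar to `T`: some correspondence of vertices makes corresponding
angles differ by less than ε. -/
def EpsSimilar (ε : ℝ) (p T : Fin 3 → Plane) : Prop :=
  ∃ σ : Equiv.Perm (Fin 3), ∀ i, |triAngle p i - triAngle T (σ i)| < ε

/-- The finite set `S` forms a triangle ε-similar to `T`. -/
def FormsSimilar (ε : ℝ) (T : Fin 3 → Plane) (S : Finset Plane) : Prop :=
  ∃ p : Fin 3 → Plane, (S : Set Plane) = Set.range p ∧ IsTriangle p ∧ EpsSimilar ε p T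

/-- The number of 3-element subsets of `P` forming a triangle ε-similar to `T`. -/
noncomputable def simCount (ε : ℝ) (T : Fin 3 → Plane) (P : Finset Plane) : ℕ :=
  Set.ncard {S : Finset Plane | S ⊆ P ∧ S.card = 3 ∧ FormsSimilar ε T S}

/-- `hGeo n T ε` = maximum over `n`-point sets `P` of the number of 3-element
subsets of `P` forming a triangle ε-similar to `T`. -/
noncomputable def hGeo (n : ℕ) (T : Fin 3 → Plane) (ε : ℝ) : ℕ :=
  sSup {m | ∃ P : Finset Plane, P.card = n ∧ simCount ε T P = m}

/-- The recurrence defining the sequence `h`. -/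
def HRec (h : ℕ → ℕ) : Prop :=
  h 0 = 0 ∧ h 1 = 0 ∧ h 2 = 0 ∧
  ∀ n, 3 ≤ n → IsGreatest
    {m | ∃ a b c : ℕ, a + b + c = n ∧ a ≤ n - 1 ∧ b ≤ n - 1 ∧ c ≤ n - 1 ∧
      m = a * b * c + h a + h b + h c} (h n)

/-!
Call three points nearly equilateral if all their angles are within one degree of `60` degrees, and
view the nearly equilateral triples as a `3`-uniform hypergraph on the plane.

Upper bound. If two vertices of a weighted point set lie in no common edge, moving all the weight
of the one of smaller degree to the other does not decrease the number of edges (Zykov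
symmetrization). So we may assume that any two points lie in a common edge. Such a set is closed
under approximate rotation of any of its points about any other by `60` degrees, in one direction
or the other. Take an edge with a side realizing the diameter `D`, and label it `a`, `b`, `c` so
that the point `p` is closest to `a` and farthest from `c`; in suitable coordinates `c = 0`,
`a = 1` and `b` is close to `exp (iπ/3)`. Rotate `p` about `c`, then the image about `a`: the
diameter bound excludes the wrong directions of rotation, and keeps `p`, its image and the image of
the image within `D` of `c`, `a` and `b`, which forces `p` into a small disc about `a`.
The three discs about the vertices of the edge are so small and so far apart that every edge
lies in one disc or meets all three, and the upper bound follows by induction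
along the recurrence for `h`.

Lower bound. Shrink optimal configurations for the three parts towards the vertices of `T`; every
transversal triple is then a triangle close to `T`.
-/

section ThreeGraph

variable {X Y : Type*} {N : X → X → X → Prop}

/-- The ternary relation `N` is the adjacency relation of a `3`-uniform hypergraph on `X`: it is
symmetric and forces its arguments to be distinct. -/
structure IsThreeGraph (N : X → X → X → Prop) : Prop where
  swap_left : ∀ {x y z}, N x y z → N y x z
  swap_right : ∀ {x y z}, N x y z → N x z y
  ne : ∀ {x y z}, N x y z → x ≠ y

/-- Any two distinct points of `S` lie in a common edge with vertices in `S`. -/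
def Covered (N : X → X → X → Prop) (S : Set X) : Prop :=
  ∀ x ∈ S, ∀ y ∈ S, x ≠ y → ∃ z ∈ S, N x y z

/-- `S` has a partition into three nonempty classes such that each edge either lies in a single
class or meets all three; by symmetry of `N` it suffices to forbid `x`, `y` in one class and `z`
in another. -/
def Splits (N : X → X → X → Prop) (S : Set X) : Prop :=
  ∃ g : X → Fin 3, (∀ i, ∃ x ∈ S, g x = i) ∧
    ∀ x ∈ S, ∀ y ∈ S, ∀ z ∈ S, N x y z → g x = g y → g x = g z

open Classical in
/-- The number of ordered edges in `s × t × u`, counted with multiplicity. Multisets record how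
often a vertex has been cloned in the symmetrization argument. -/
def tripleCount (N : X → X → X → Prop) (s t u : Multiset X) : ℕ :=
  (s ×ˢ t ×ˢ u).countP fun w => N w.1 w.2.1 w.2.2

theorem tripleCount_add_left (s s' t u : Multiset X) :
    tripleCount N (s + s') t u = tripleCount N s t u + tripleCount N s' t u := by
  simp only [tripleCount, Multiset.add_product, Multiset.countP_add]

theorem tripleCount_add_right (s t u u' : Multiset X) :
    tripleCount N s t (u + u') = tripleCount N s t u + tripleCount N s t u' := by
  simp only [tripleCount, Multiset.product_add, Multiset.countP_add]

theorem tripleCount_nsmul_right (s t u : Multiset X) (n : ℕ) :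
    tripleCount N s t (n • u) = n * tripleCount N s t u := by
  induction n with
  | zero => simp [tripleCount]
  | succ n ih => rw [succ_nsmul, tripleCount_add_right, ih, Nat.succ_mul]

theorem tripleCount_le_card_mul (s t u : Multiset X) :
    tripleCount N s t u ≤ s.card * t.card * u.card := by
  classical
  simpa only [tripleCount, Multiset.card_product, mul_assoc] using
    Multiset.countP_le_card (fun w : X × X × X => N w.1 w.2.1 w.2.2) (s ×ˢ t ×ˢ u)

theorem tripleCount_eq_zero {s t u : Multiset X}
    (hN : ∀ x ∈ s, ∀ y ∈ t, ∀ z ∈ u, ¬ N x y z) : tripleCount N s t u = 0 := by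
  classical
  rw [tripleCount, Multiset.countP_eq_zero]
  rintro ⟨x, y, z⟩ hw
  simp only [Multiset.mem_product] at hw
  exact hN x hw.1 y hw.2.1 z hw.2.2

theorem tripleCount_map (f : Y → X) (s t u : Multiset Y) :
    tripleCount N (s.map f) (t.map f) (u.map f) =
      tripleCount (fun x y z => N (f x) (f y) (f z)) s t u := by
  have hmap : s.map f ×ˢ t.map f ×ˢ u.map f =
      (s ×ˢ t ×ˢ u).map (Prod.map f (Prod.map f f)) := by
    simp [SProd.sprod, Multiset.product, Multiset.map_bind, Multiset.bind_map]
  rw [tripleCount, hmap, Multiset.countP_map, ← Multiset.countP_eq_card_filter]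
  rfl

open Classical in
theorem tripleCount_val (P : Finset X) :
    tripleCount N P.val P.val P.val =
      ((P ×ˢ P ×ˢ P).filter fun w => N w.1 w.2.1 w.2.2).card := by
  rw [Finset.card_def, Finset.filter_val, Finset.product_val, Finset.product_val,
    ← Multiset.countP_eq_card_filter, tripleCount]

namespace IsThreeGraph

theorem perm (hN : IsThreeGraph N) {v : Fin 3 → X} (hv : N (v 0) (v 1) (v 2))
    (σ : Equiv.Perm (Fin 3)) : N (v (σ 0)) (v (σ 1)) (v (σ 2)) := by
  have values : ∀ σ : Equiv.Perm (Fin 3), (σ 0, σ 1, σ 2) ∈ ({(0, 1, 2), (0, 2, 1), (1, 0, 2),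
      (1, 2, 0), (2, 0, 1), (2, 1, 0)} : Finset (Fin 3 × Fin 3 × Fin 3)) := by decide
  have hσ := values σ
  simp only [Finset.mem_insert, Finset.mem_singleton, Prod.mk.injEq] at hσ
  rcases hσ with ⟨h0, h1, h2⟩ | ⟨h0, h1, h2⟩ | ⟨h0, h1, h2⟩ | ⟨h0, h1, h2⟩ | ⟨h0, h1, h2⟩ |
    ⟨h0, h1, h2⟩ <;> rw [h0, h1, h2]
  exacts [hv, hN.swap_right hv, hN.swap_left hv, hN.swap_right (hN.swap_left hv),
    hN.swap_left (hN.swap_right hv), hN.swap_left (hN.swap_right (hN.swap_left hv))]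

theorem tripleCount_swap_left (hN : IsThreeGraph N) (s t u : Multiset X) :
    tripleCount N s t u = tripleCount N t s u := by
  classical
  have hmap : s ×ˢ t ×ˢ u = (t ×ˢ s ×ˢ u).map fun w => (w.2.1, w.1, w.2.2) := by
    simp only [SProd.sprod, Multiset.product, Multiset.map_bind, Multiset.map_map,
      Function.comp_def]
    exact Multiset.bind_bind s t
  rw [tripleCount, hmap, Multiset.countP_map, ← Multiset.countP_eq_card_filter, tripleCount]
  exact Multiset.countP_congr rfl fun w _ => propext ⟨hN.swap_left, hN.swap_left⟩

theorem tripleCount_swap_right (hN : IsThreeGraph N) (s t u : Multiset X) :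
    tripleCount N s t u = tripleCount N s u t := by
  classical
  have hmap : s ×ˢ t ×ˢ u = (s ×ˢ u ×ˢ t).map fun w => (w.1, w.2.2, w.2.1) := by
    simp only [SProd.sprod, Multiset.product, Multiset.map_bind, Multiset.map_map,
      Function.comp_def, Multiset.bind_map_comm t u]
  rw [tripleCount, hmap, Multiset.countP_map, ← Multiset.countP_eq_card_filter, tripleCount]
  exact Multiset.countP_congr rfl fun w _ => propext ⟨hN.swap_right, hN.swap_right⟩

theorem tripleCount_add_middle (hN : IsThreeGraph N) (s t t' u : Multiset X) :
    tripleCount N s (t + t') u = tripleCount N s t u + tripleCount N s t' u := by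
  rw [hN.tripleCount_swap_left, tripleCount_add_left, hN.tripleCount_swap_left t,
    hN.tripleCount_swap_left t']

theorem tripleCount_add_self (hN : IsThreeGraph N) (s t : Multiset X) :
    tripleCount N (s + t) (s + t) (s + t) =
      tripleCount N s s s + 3 * tripleCount N s s t + 3 * tripleCount N t t s +
        tripleCount N t t t := by
  simp only [tripleCount_add_left, hN.tripleCount_add_middle, tripleCount_add_right]
  rw [hN.tripleCount_swap_left t s s, hN.tripleCount_swap_right s t s,
    hN.tripleCount_swap_left s t t, hN.tripleCount_swap_right t s t]
  ring

theorem tripleCount_add_self_of_forall_not (hN : IsThreeGraph N) {s t : Multiset X}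
    (ht : ∀ x ∈ t, ∀ y ∈ t, ∀ z ∈ s + t, ¬ N x y z) :
    tripleCount N (s + t) (s + t) (s + t) = tripleCount N s s s + 3 * tripleCount N s s t := by
  have htts : tripleCount N t t s = 0 := tripleCount_eq_zero fun x hx y hy z hz =>
    ht x hx y hy z (Multiset.mem_add.2 (.inl hz))
  have httt : tripleCount N t t t = 0 := tripleCount_eq_zero fun x hx y hy z hz =>
    ht x hx y hy z (Multiset.mem_add.2 (.inr hz))
  rw [hN.tripleCount_add_self, htts, httt, mul_zero, add_zero, add_zero]

theorem tripleCount_le_of_uncovered (hN : IsThreeGraph N) {t : Multiset X} {x y : X}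
    (huncov : ∀ z ∈ t, ¬ N x y z) (hdeg : tripleCount N t t {y} ≤ tripleCount N t t {x})
    (a b : ℕ) :
    tripleCount N (t + (a • {x} + b • {y})) (t + (a • {x} + b • {y})) (t + (a • {x} + b • {y})) ≤
      tripleCount N (t + (a + b) • {x}) (t + (a + b) • {x}) (t + (a + b) • {x}) := by
  have hold : ∀ p ∈ a • ({x} : Multiset X) + b • {y}, ∀ q ∈ a • ({x} : Multiset X) + b • {y},
      ∀ z ∈ t + (a • {x} + b • {y}), ¬ N p q z := by
    intro p hp q hq z hz hpqz
    have hpq := hN.ne hpqz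
    have hqz := hN.ne (hN.swap_right (hN.swap_left hpqz))
    have hpz := hN.ne (hN.swap_right hpqz)
    have hsymm := hN.swap_left hpqz
    simp only [Multiset.mem_add, Multiset.mem_nsmul, Multiset.mem_singleton] at hp hq hz
    grind
  have hnew : ∀ p ∈ (a + b) • ({x} : Multiset X), ∀ q ∈ (a + b) • ({x} : Multiset X),
      ∀ z ∈ t + (a + b) • {x}, ¬ N p q z := by
    intro p hp q hq z _ hpqz
    simp only [Multiset.mem_nsmul, Multiset.mem_singleton] at hp hq
    exact hN.ne hpqz (hp.2.trans hq.2.symm)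
  rw [hN.tripleCount_add_self_of_forall_not hold, hN.tripleCount_add_self_of_forall_not hnew,
    tripleCount_add_right, tripleCount_nsmul_right, tripleCount_nsmul_right,
    tripleCount_nsmul_right, add_mul]
  gcongr

theorem exists_toFinset_card_lt_of_uncovered [DecidableEq X] (hN : IsThreeGraph N)
    {s : Multiset X} {x y : X} (hx : x ∈ s) (hy : y ∈ s) (hxy : x ≠ y)
    (huncov : ∀ z ∈ s, ¬ N x y z) :
    ∃ s' : Multiset X, s'.card = s.card ∧ s'.toFinset.card < s.toFinset.card ∧
      tripleCount N s s s ≤ tripleCount N s' s' s' := by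
  obtain ⟨t, a, b, hyt, hxt, hs⟩ : ∃ (t : Multiset X) (a b : ℕ),
      y ∉ t ∧ x ∉ t ∧ s = t + (a • {x} + b • {y}) := by
    refine ⟨s.filter fun z => z ≠ x ∧ z ≠ y, s.count x, s.count y, by simp, by simp, ?_⟩
    ext z
    simp only [Multiset.count_add, Multiset.count_nsmul, Multiset.count_filter,
      Multiset.count_singleton]
    grind
  wlog hdeg : tripleCount N t t {y} ≤ tripleCount N t t {x} generalizing x y a b
  · exact this hy hx hxy.symm (fun z hz h => huncov z hz (hN.swap_left h)) b a hxt hyt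
      (hs.trans (by rw [add_comm (a • _)])) (le_of_not_ge hdeg)
  have huncov_t : ∀ z ∈ t, ¬ N x y z := fun z hz => huncov z (hs ▸ Multiset.mem_add.2 (.inl hz))
  have hsub : (t + (a + b) • {x}).toFinset ⊆ s.toFinset.erase y := by
    intro z
    simp only [Multiset.mem_toFinset, Finset.mem_erase, Multiset.mem_add, Multiset.mem_nsmul,
      Multiset.mem_singleton]
    rintro (hz | ⟨-, rfl⟩)
    · exact ⟨fun h => hyt (h ▸ hz), hs ▸ Multiset.mem_add.2 (.inl hz)⟩
    · exact ⟨hxy, hx⟩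
  refine ⟨t + (a + b) • {x}, by simp [hs], (Finset.card_le_card hsub).trans_lt ?_, ?_⟩
  · exact Finset.card_erase_lt_of_mem (Multiset.mem_toFinset.2 hy)
  · rw [hs]
    exact hN.tripleCount_le_of_uncovered huncov_t hdeg a b

theorem exists_covered (hN : IsThreeGraph N) (s : Multiset X) :
    ∃ s' : Multiset X, s'.card = s.card ∧ tripleCount N s s s ≤ tripleCount N s' s' s' ∧
      Covered N {x | x ∈ s'} := by
  classical
  induction hm : s.toFinset.card using Nat.strong_induction_on generalizing s with
  | _ m ih =>
  by_cases hcov : Covered N {x | x ∈ s}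
  · exact ⟨s, rfl, le_rfl, hcov⟩
  · simp only [Covered, Set.mem_ofPred_eq] at hcov
    push Not at hcov
    obtain ⟨x, hx, y, hy, hxy, huncov⟩ := hcov
    obtain ⟨s₁, hcard, hlt, hle⟩ := hN.exists_toFinset_card_lt_of_uncovered hx hy hxy huncov
    obtain ⟨s₂, hcard₂, hle₂, hcov₂⟩ := ih _ (hm ▸ hlt) s₁ rfl
    exact ⟨s₂, hcard₂.trans hcard, hle.trans hle₂, hcov₂⟩

theorem tripleCount_sum_self_le (hN : IsThreeGraph N) {c : Fin 3 → Multiset X}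
    (hc : ∀ {i j}, i ≠ j → tripleCount N (c i) (c i) (c j) = 0) :
    tripleCount N (∑ i, c i) (∑ i, c i) (∑ i, c i) ≤
      6 * ∏ i, (c i).card + ∑ i, tripleCount N (c i) (c i) (c i) := by
  have hcross := tripleCount_le_card_mul (N := N) (c 0) (c 1) (c 2)
  rw [Fin.sum_univ_three, hN.tripleCount_add_self, hN.tripleCount_add_self (c 0)]
  simp only [tripleCount_add_left, hN.tripleCount_add_middle, tripleCount_add_right]
  rw [hN.tripleCount_swap_left (c 1) (c 0) (c 2), hc (i := 0) (j := 1) (by decide),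
    hc (i := 0) (j := 2) (by decide), hc (i := 1) (j := 0) (by decide),
    hc (i := 1) (j := 2) (by decide), hc (i := 2) (j := 0) (by decide),
    hc (i := 2) (j := 1) (by decide), Fin.prod_univ_three, Fin.sum_univ_three]
  lia

theorem injective (hN : IsThreeGraph N) {v : Fin 3 → X} (hv : N (v 0) (v 1) (v 2)) :
    Function.Injective v := by
  have h01 := hN.ne hv
  have h02 := hN.ne (hN.swap_right hv)
  have h12 := hN.ne (hN.swap_right (hN.swap_left hv))
  intro i j hij
  fin_cases i <;> fin_cases j <;> simp_all

theorem six_mul_card_le_tripleCount (hN : IsThreeGraph N) {P : Finset X} {F : Finset (Finset X)}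
    (hF : ∀ S ∈ F, S ⊆ P ∧ ∃ v : Fin 3 → X, (S : Set X) = Set.range v ∧ N (v 0) (v 1) (v 2)) :
    6 * F.card ≤ tripleCount N P.val P.val P.val := by
  classical
  choose hsub v hrange hv using hF
  have hmem : ∀ S hS i, v S hS i ∈ P := fun S hS i =>
    hsub S hS (Finset.mem_coe.1 (hrange S hS ▸ Set.mem_range_self i))
  have hcard : (Finset.univ : Finset (F × Equiv.Perm (Fin 3))).card = 6 * F.card := by
    rw [Finset.card_univ, Fintype.card_prod, Fintype.card_coe, Fintype.card_perm,
      Fintype.card_fin, mul_comm]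
    rfl
  rw [tripleCount_val, ← hcard]
  refine Finset.card_le_card_of_injOn (fun ⟨⟨S, hS⟩, σ⟩ =>
    (v S hS (σ 0), v S hS (σ 1), v S hS (σ 2))) ?_ ?_
  · rintro ⟨⟨S, hS⟩, σ⟩ -
    exact Finset.mem_coe.2 (Finset.mem_filter.2
      ⟨by simp only [Finset.mem_product, hmem, and_self], hN.perm (hv S hS) σ⟩)
  · rintro ⟨⟨S, hS⟩, σ⟩ - ⟨⟨S', hS'⟩, σ'⟩ - heq
    simp only [Prod.mk.injEq] at heq
    have hcomp : v S hS ∘ σ = v S' hS' ∘ σ' := by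
      ext i
      fin_cases i
      exacts [heq.1, heq.2.1, heq.2.2]
    obtain rfl : S = S' := Finset.coe_injective <| by
      rw [hrange S hS, hrange S' hS', ← σ.surjective.range_comp (v S hS), hcomp,
        σ'.surjective.range_comp]
    obtain rfl : σ = σ' := Equiv.ext fun i => hN.injective (hv S hS) (congrFun hcomp i)
    rfl

end IsThreeGraph

end ThreeGraph

namespace HRec

variable {h : ℕ → ℕ}

theorem mul_add_add_add_le (hrec : HRec h) {a b c : ℕ} (ha : 0 < a) (hb : 0 < b) (hc : 0 < c) :
    a * b * c + h a + h b + h c ≤ h (a + b + c) :=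
  (hrec.2.2.2 (a + b + c) (by lia)).2 ⟨a, b, c, rfl, by lia, by lia, by lia, rfl⟩

theorem eq_zero_of_lt_three (hrec : HRec h) {n : ℕ} (hn : n < 3) : h n = 0 := by
  obtain ⟨h0, h1, h2, -⟩ := hrec
  interval_cases n <;> assumption

theorem exists_eq_mul_add_add_add (hrec : HRec h) {n : ℕ} (hn : 3 ≤ n) :
    ∃ a b c, a + b + c = n ∧ a < n ∧ b < n ∧ c < n ∧ h n = a * b * c + h a + h b + h c := by
  obtain ⟨a, b, c, hsum, ha, hb, hc, heq⟩ := (hrec.2.2.2 n hn).1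
  exact ⟨a, b, c, hsum, by lia, by lia, by lia, heq⟩

theorem mul_add_le_pow_three (hrec : HRec h) (n : ℕ) : 24 * h n + n ≤ n ^ 3 := by
  induction n using Nat.strong_induction_on with
  | _ n ih =>
  rcases lt_or_ge n 3 with hn | hn
  · rw [hrec.eq_zero_of_lt_three hn, mul_zero, zero_add]
    exact Nat.le_self_pow three_ne_zero n
  · obtain ⟨a, b, c, rfl, ha, hb, hc, heq⟩ := hrec.exists_eq_mul_add_add_add hn
    have muirhead : 6 * (a * b * c) ≤
        a ^ 2 * b + a ^ 2 * c + b ^ 2 * a + b ^ 2 * c + c ^ 2 * a + c ^ 2 * b := by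
      zify
      nlinarith [mul_nonneg (Int.natCast_nonneg a) (sq_nonneg ((b : ℤ) - c)),
        mul_nonneg (Int.natCast_nonneg b) (sq_nonneg ((a : ℤ) - c)),
        mul_nonneg (Int.natCast_nonneg c) (sq_nonneg ((a : ℤ) - b))]
    calc 24 * h (a + b + c) + (a + b + c)
        = 24 * (a * b * c) + (24 * h a + a) + (24 * h b + b) + (24 * h c + c) := by
          rw [heq]; ring
      _ ≤ 24 * (a * b * c) + a ^ 3 + b ^ 3 + c ^ 3 := by gcongr <;> apply ih <;> assumption
      _ ≤ (a + b + c) ^ 3 := by linarith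

theorem mul_three_pow_add (hrec : HRec h) (k : ℕ) : 24 * h (3 ^ k) + 3 ^ k = (3 ^ k) ^ 3 := by
  refine (hrec.mul_add_le_pow_three _).antisymm ?_
  induction k with
  | zero => simp
  | succ k ih =>
    have hpos : 0 < 3 ^ k := by positivity
    have hsplit := hrec.mul_add_add_add_le hpos hpos hpos
    rw [show 3 ^ (k + 1) = 3 ^ k + 3 ^ k + 3 ^ k by ring]
    linarith

end HRec

theorem sum_filter_eq {X ι : Type*} [Fintype ι] [DecidableEq ι] (g : X → ι) (s : Multiset X) :
    ∑ i, s.filter (g · = i) = s := by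
  classical
  ext x
  simp [Multiset.count_sum', Multiset.count_filter]

theorem IsThreeGraph.tripleCount_self_le {X : Type*} {N : X → X → X → Prop} (hN : IsThreeGraph N)
    (hsplit : ∀ S : Set X, S.Finite → S.Nontrivial → Covered N S → Splits N S)
    {h : ℕ → ℕ} (hrec : HRec h) (s : Multiset X) : tripleCount N s s s ≤ 6 * h s.card := by
  induction hn : s.card using Nat.strong_induction_on generalizing s with
  | _ n ih =>
  obtain ⟨s', hcard, hle, hcov⟩ := hN.exists_covered s
  refine hle.trans ?_
  by_cases hnt : {x | x ∈ s'}.Nontrivial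
  · obtain ⟨g, hsurj, hg⟩ := hsplit _ s'.finite_toSet hnt hcov
    set c : Fin 3 → Multiset X := fun i => s'.filter (g · = i) with hc
    have hsum : ∑ i, c i = s' := sum_filter_eq g s'
    have hcard_sum : ∑ i, (c i).card = n := by rw [← Multiset.card_sum, hsum, hcard, hn]
    have hpos : ∀ i, 0 < (c i).card := fun i => by
      obtain ⟨x, hx, hxi⟩ := hsurj i
      exact Multiset.card_pos_iff_exists_mem.2 ⟨x, Multiset.mem_filter.2 ⟨hx, hxi⟩⟩
    have hlt : ∀ i, (c i).card < n := fun i => by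
      rw [← hcard_sum]
      exact Finset.single_lt_sum (f := fun i => (c i).card) (j := i + 1) (by simp)
        (Finset.mem_univ _) (Finset.mem_univ _) (hpos _) fun _ _ _ => Nat.zero_le _
    have hzero : ∀ {i j}, i ≠ j → tripleCount N (c i) (c i) (c j) = 0 := by
      refine fun {i j} hij => tripleCount_eq_zero fun x hx y hy z hz hxyz => hij ?_
      rw [hc, Multiset.mem_filter] at hx hy hz
      rw [← hx.2, ← hz.2, hg x hx.1 y hy.1 z hz.1 hxyz (hx.2.trans hy.2.symm)]
    calc tripleCount N s' s' s'
        ≤ 6 * ∏ i, (c i).card + ∑ i, tripleCount N (c i) (c i) (c i) := by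
          simpa only [hsum] using hN.tripleCount_sum_self_le hzero
      _ ≤ 6 * ∏ i, (c i).card + ∑ i, 6 * h (c i).card := by
          gcongr with i
          exact ih _ (hlt i) _ rfl
      _ ≤ 6 * h n := by
          rw [← hcard_sum, ← Finset.mul_sum, ← mul_add]
          gcongr
          simpa only [Fin.prod_univ_three, Fin.sum_univ_three, add_assoc] using
            hrec.mul_add_add_add_le (hpos 0) (hpos 1) (hpos 2)
  · rw [Set.not_nontrivial_iff] at hnt
    rw [tripleCount_eq_zero fun x hx y hy z _ hxyz => hN.ne hxyz (hnt hx hy)]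
    exact Nat.zero_le _

section NearlyEquilateral

open Real

theorem sin_mem_Icc_of_abs_sub_pi_div_three_lt {θ : ℝ} (hθ : |θ - π / 3| < π / 180) :
    sin θ ∈ Set.Icc 0.857 0.875 := by
  obtain ⟨x, rfl⟩ : ∃ x, θ = π / 3 + x := ⟨θ - π / 3, by ring⟩
  rw [add_sub_cancel_left] at hθ
  have hx : |x| ≤ 0.01746 := by linarith [pi_lt_d4]
  have hsin := abs_le.1 ((abs_sin_le_abs (x := x)).trans hx)
  have hcos_le := cos_le_one x
  have hcos_ge : 0.9998 ≤ cos x := by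
    nlinarith [one_sub_sq_div_two_le_cos (x := x), sq_abs x, abs_nonneg x]
  have hsqrt_le : √3 ≤ 1.7321 := sqrt_le_iff.2 (by norm_num)
  have hsqrt_ge : 1.732 ≤ √3 := le_sqrt_of_sq_le (by norm_num)
  rw [sin_add, sin_pi_div_three, cos_pi_div_three]
  constructor <;> nlinarith

variable {V P : Type*} [NormedAddCommGroup V] [InnerProductSpace ℝ V]
  [MetricSpace P] [NormedAddTorsor V P]

/-- All angles of the triangle `x`, `y`, `z` are within one degree of `60` degrees. -/
structure NearlyEquilateral (x y z : P) : Prop where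
  fst : |∠ y x z - π / 3| < π / 180
  snd : |∠ x y z - π / 3| < π / 180
  thd : |∠ x z y - π / 3| < π / 180

theorem isThreeGraph_nearlyEquilateral :
    IsThreeGraph (NearlyEquilateral (V := V) (P := P)) where
  swap_left {x y z} h := ⟨h.snd, h.fst, angle_comm x z y ▸ h.thd⟩
  swap_right {x y z} h := ⟨angle_comm y x z ▸ h.fst, h.thd, h.snd⟩
  ne := by
    rintro x _ z h rfl
    have hright := h.fst
    rw [angle_self_left] at hright
    linarith [le_abs_self (π / 2 - π / 3), pi_pos]

theorem NearlyEquilateral.dist_le {x y z : P} (h : NearlyEquilateral x y z) :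
    dist x z ≤ 1.022 * dist x y := by
  have hy := sin_mem_Icc_of_abs_sub_pi_div_three_lt h.snd
  have hz := sin_mem_Icc_of_abs_sub_pi_div_three_lt h.thd
  have hsines : sin (∠ x z y) * dist x z = sin (∠ x y z) * dist x y := by
    simpa only [angle_comm y z x, dist_comm z x] using law_sin y z x
  have hle : 0.857 * dist x z ≤ 0.875 * dist x y :=
    calc 0.857 * dist x z ≤ sin (∠ x z y) * dist x z := by gcongr; exact hz.1
      _ = sin (∠ x y z) * dist x y := hsines
      _ ≤ 0.875 * dist x y := by gcongr; exact hy.2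
  linarith [dist_nonneg (x := x) (y := y)]

end NearlyEquilateral

section Rotation

open Complex ComplexConjugate
open scoped InnerProductSpace

theorem norm_sub_exp_mul_I_le (w : ℂ) (θ : ℝ) :
    ‖w - exp (θ * I)‖ ≤ |‖w‖ - 1| + |arg w - θ| := by
  have hradial : ‖w - exp (arg w * I)‖ = |‖w‖ - 1| := by
    nth_rw 1 [← norm_mul_exp_arg_mul_I w]
    rw [← sub_one_mul, norm_mul, norm_exp_ofReal_mul_I, mul_one, ← ofReal_one, ← ofReal_sub,
      norm_real, Real.norm_eq_abs]
  have hangular : ‖exp (arg w * I) - exp (θ * I)‖ ≤ |arg w - θ| := by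
    have hfactor : exp (arg w * I) - exp (θ * I) =
        exp (θ * I) * (exp (I * ((arg w - θ : ℝ) : ℂ)) - 1) := by
      rw [mul_sub_one, ← exp_add]
      push_cast
      ring_nf
    rw [hfactor, norm_mul, norm_exp_ofReal_mul_I, one_mul]
    exact Real.norm_exp_I_mul_ofReal_sub_one_le
  calc ‖w - exp (θ * I)‖ ≤ ‖w - exp (arg w * I)‖ + ‖exp (arg w * I) - exp (θ * I)‖ :=
        norm_sub_le_norm_sub_add_norm_sub _ _ _
    _ ≤ _ := by rw [hradial]; gcongr

/-- The primitive sixth root of unity `exp (iπ/3)`: multiplication by it rotates by `60` degrees. -/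
def sixthRoot : ℂ := exp ((Real.pi / 3 : ℝ) * I)

local notation "ω" => sixthRoot

theorem conj_sixthRoot : conj ω = exp ((-(Real.pi / 3) : ℝ) * I) := by
  rw [sixthRoot, ← exp_conj, map_mul, conj_I, conj_ofReal]
  push_cast
  ring_nf

theorem sixthRoot_re : re ω = 1 / 2 := by
  rw [sixthRoot, exp_ofReal_mul_I_re, Real.cos_pi_div_three]

theorem sixthRoot_im_sq : im ω ^ 2 = 3 / 4 := by
  rw [sixthRoot, exp_ofReal_mul_I_im, Real.sin_pi_div_three, div_pow, Real.sq_sqrt] <;> norm_num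

theorem norm_sixthRoot : ‖ω‖ = 1 := norm_exp_ofReal_mul_I _

theorem sixthRoot_mul_conj : ω * conj ω = 1 := by
  rw [mul_conj, normSq_eq_norm_sq, norm_sixthRoot, one_pow, ofReal_one]

theorem sixthRoot_add_conj : ω + conj ω = 1 := by
  rw [add_conj, sixthRoot_re]
  norm_num

theorem sixthRoot_sq : ω ^ 2 = -conj ω := by
  linear_combination ω * sixthRoot_add_conj - sixthRoot_mul_conj + sixthRoot_add_conj

theorem norm_sixthRoot_mul (z : ℂ) : ‖ω * z‖ = ‖z‖ := by rw [norm_mul, norm_sixthRoot, one_mul]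

/-- `z` is the image of `y` under a rotation about `x` by `60` degrees in one of the two
directions, up to an error of four percent of the distance from `x` to `y`: in a
nearly equilateral triangle the ratio of two sides is within `0.022` of `1` and each angle is within
`π / 180 < 0.0175` of `π / 3`. -/
def NearRotation (x y z : ℂ) : Prop :=
  ‖z - x - ω * (y - x)‖ ≤ 0.04 * ‖y - x‖ ∨ ‖z - x - conj ω * (y - x)‖ ≤ 0.04 * ‖y - x‖

theorem NearlyEquilateral.nearRotation {x y z : ℂ} (h : NearlyEquilateral x y z) :
    NearRotation x y z := by
  have hN := isThreeGraph_nearlyEquilateral (V := ℂ) (P := ℂ)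
  have hy : y - x ≠ 0 := sub_ne_zero.2 (hN.ne h).symm
  have hz : z - x ≠ 0 := sub_ne_zero.2 (hN.ne (hN.swap_right h)).symm
  have hypos : 0 < ‖y - x‖ := norm_pos_iff.2 hy
  have hle := h.dist_le
  have hge := (hN.swap_right h).dist_le
  rw [dist_eq, dist_eq, norm_sub_rev x, norm_sub_rev x] at hle hge
  set w := (z - x) / (y - x) with hw
  have hzw : z - x = w * (y - x) := by rw [hw, div_mul_cancel₀ _ hy]
  have hmod : |‖w‖ - 1| ≤ 0.022 := by
    rw [hzw, norm_mul] at hle hge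
    exact abs_le.2 ⟨by nlinarith, by nlinarith⟩
  have hangle : |(|arg w|) - Real.pi / 3| ≤ 0.0175 := by
    have harg : ∠ y x z = |arg w| := by
      rw [hw, ← angle_eq_abs_arg hz hy, InnerProductGeometry.angle_comm]
      rfl
    have := h.fst
    rw [harg] at this
    linarith [Real.pi_lt_d4]
  have hscale : ∀ {ζ : ℂ}, ‖w - ζ‖ ≤ 0.04 → ‖z - x - ζ * (y - x)‖ ≤ 0.04 * ‖y - x‖ := by
    intro ζ hζ
    rw [hzw, ← sub_mul, norm_mul]
    gcongr
  rcases abs_cases (arg w) with ⟨habs, -⟩ | ⟨habs, -⟩ <;> rw [habs] at hangle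
  · exact .inl (hscale ((norm_sub_exp_mul_I_le w _).trans (by linarith)))
  · rw [← abs_neg, neg_sub', neg_neg] at hangle
    refine .inr (hscale ?_)
    rw [conj_sixthRoot]
    exact (norm_sub_exp_mul_I_le w _).trans (by linarith)

theorem NearRotation.conj_iff {x y z : ℂ} :
    NearRotation (conj x) (conj y) (conj z) ↔ NearRotation x y z := by
  have hnorm : ∀ ζ, ‖conj z - conj x - conj ζ * (conj y - conj x)‖ = ‖z - x - ζ * (y - x)‖ :=
    fun ζ => by simp only [← map_sub, ← map_mul, norm_conj]
  rw [NearRotation, NearRotation, hnorm, ← conj_conj ω, hnorm, ← map_sub, norm_conj, or_comm,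
    conj_conj]

theorem NearRotation.affine_iff {k : ℂ} (hk : k ≠ 0) (c : ℂ) {x y z : ℂ} :
    NearRotation (c + k * x) (c + k * y) (c + k * z) ↔ NearRotation x y z := by
  have hnorm : ∀ ζ, ‖c + k * z - (c + k * x) - ζ * (c + k * y - (c + k * x))‖ =
      ‖k‖ * ‖z - x - ζ * (y - x)‖ := fun ζ => by
    rw [← norm_mul]
    ring_nf
  have hside : ‖c + k * y - (c + k * x)‖ = ‖k‖ * ‖y - x‖ := by rw [← norm_mul]; ring_nf
  have hpos : 0 < ‖k‖ := norm_pos_iff.2 hk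
  simp only [NearRotation, hnorm, hside, mul_left_comm (0.04 : ℝ), mul_le_mul_iff_right₀ hpos]

/-- `S` has diameter at most `D` and is closed under approximate rotation of one of its points
about another by `60` degrees, the direction of the rotation not being at our disposal. -/
structure RotationClosed (S : Set ℂ) (D : ℝ) : Prop where
  norm_sub_le_of_mem : ∀ {x y}, x ∈ S → y ∈ S → ‖x - y‖ ≤ D
  exists_nearRotation : ∀ {x y}, x ∈ S → y ∈ S → ∃ z ∈ S, NearRotation x y z

namespace RotationClosed

variable {S : Set ℂ} {D : ℝ}

theorem preimage_conj (hS : RotationClosed S D) : RotationClosed (conj ⁻¹' S) D where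
  norm_sub_le_of_mem {x y} hx hy := by
    rw [← norm_conj, map_sub]
    exact hS.norm_sub_le_of_mem hx hy
  exists_nearRotation {x y} hx hy := by
    obtain ⟨z, hz, hrot⟩ := hS.exists_nearRotation hx hy
    rw [← conj_conj z] at hz hrot
    exact ⟨conj z, hz, NearRotation.conj_iff.1 hrot⟩

theorem preimage_affine (hS : RotationClosed S D) {k : ℂ} (hk : k ≠ 0) (c : ℂ) :
    RotationClosed ((c + k * ·) ⁻¹' S) (D / ‖k‖) where
  norm_sub_le_of_mem {x y} hx hy := by
    have hle : ‖c + k * x - (c + k * y)‖ ≤ D := hS.norm_sub_le_of_mem hx hy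
    rwa [add_sub_add_left_eq_sub, ← mul_sub, norm_mul, ← le_div_iff₀' (norm_pos_iff.2 hk)] at hle
  exists_nearRotation {x y} hx hy := by
    obtain ⟨z, hz, hrot⟩ := hS.exists_nearRotation hx hy
    obtain ⟨z, rfl⟩ : ∃ z', z = c + k * z' := ⟨(z - c) / k, by field_simp; ring⟩
    exact ⟨z, hz, (NearRotation.affine_iff hk c).1 hrot⟩

theorem mono (hS : RotationClosed S D) {D' : ℝ} (hD : D ≤ D') : RotationClosed S D' where
  norm_sub_le_of_mem hx hy := (hS.norm_sub_le_of_mem hx hy).trans hD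
  exists_nearRotation := hS.exists_nearRotation

end RotationClosed

theorem inner_add_inner_conj_sixthRoot (u : ℂ) : ⟪u, ω⟫_ℝ + ⟪u, conj ω⟫_ℝ = ⟪u, 1⟫_ℝ := by
  rw [← inner_add_right, sixthRoot_add_conj]

theorem norm_sq_eq_inner_sixthRoot (u : ℂ) :
    ‖u‖ ^ 2 = (⟪u, ω⟫_ℝ + ⟪u, conj ω⟫_ℝ) ^ 2 + (⟪u, ω⟫_ℝ - ⟪u, conj ω⟫_ℝ) ^ 2 / 3 := by
  have hdiff : ⟪u, ω⟫_ℝ - ⟪u, conj ω⟫_ℝ = 2 * u.im * im ω := by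
    simp [Complex.inner]
    ring
  have hsum : ⟪u, ω⟫_ℝ + ⟪u, conj ω⟫_ℝ = u.re := by
    rw [inner_add_inner_conj_sixthRoot]
    simp [Complex.inner]
  rw [hsum, hdiff, mul_pow, sixthRoot_im_sq, ← normSq_eq_norm_sq, normSq_apply]
  ring

namespace RotationClosed

variable {S : Set ℂ} {b p q : ℂ}

theorem exists_norm_sub_sixthRoot_mul_le (hS : RotationClosed S 1.022) (h0 : 0 ∈ S) (hbS : b ∈ S)
    (hpS : p ∈ S) (hb : ‖b - ω‖ ≤ 0.04) (hp0 : ‖p - 1‖ ≤ ‖p‖) (hpb : ‖p - 1‖ ≤ ‖p - b‖) :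
    ∃ q ∈ S, ‖q - ω * p‖ ≤ 0.0409 := by
  have hp : ‖p‖ ≤ 1.022 := by simpa using hS.norm_sub_le_of_mem hpS h0
  obtain ⟨q, hqS, hq | hq⟩ := hS.exists_nearRotation h0 hpS <;> simp only [sub_zero] at hq
  · exact ⟨q, hqS, by linarith⟩
  -- Rotating `p` clockwise about `0` would take it too far away from `b`.
  exfalso
  have hupper : ‖p + conj ω‖ ≤ 1.103 := by
    have hrotate : p + conj ω = ω * ((b - ω) + (q - b) - (q - conj ω * p)) := by
      linear_combination sixthRoot_sq - p * sixthRoot_mul_conj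
    rw [hrotate, norm_sixthRoot_mul]
    linarith [norm_sub_le ((b - ω) + (q - b)) (q - conj ω * p), norm_add_le (b - ω) (q - b),
      hS.norm_sub_le_of_mem hqS hbS]
  have hre : 1 / 2 ≤ ⟪p, 1⟫_ℝ := by
    have := norm_sub_sq_real p 1
    rw [norm_one] at this
    nlinarith [norm_nonneg (p - 1)]
  have hinner : -0.0632 ≤ ⟪p, conj ω⟫_ℝ := by
    have hnorm_b : ‖b‖ ≤ 1.022 := by simpa using hS.norm_sub_le_of_mem hbS h0
    have hpω : |⟪p, b - ω⟫_ℝ| ≤ 1.022 * 0.04 := (abs_real_inner_le_norm _ _).trans (by gcongr)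
    have hcompare : 2 * ⟪p, b⟫_ℝ ≤ 2 * ⟪p, 1⟫_ℝ + ‖b‖ ^ 2 - 1 := by
      have := pow_le_pow_left₀ (norm_nonneg _) hpb 2
      rw [norm_sub_sq_real, norm_sub_sq_real, norm_one] at this
      linarith
    rw [inner_sub_right] at hpω
    nlinarith [abs_le.1 hpω, inner_add_inner_conj_sixthRoot p, norm_nonneg b]
  have hexpand := norm_add_sq_real p (conj ω)
  rw [norm_conj, norm_sixthRoot, norm_sq_eq_inner_sixthRoot p] at hexpand
  rw [← inner_add_inner_conj_sixthRoot] at hre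
  nlinarith [norm_nonneg (p + conj ω), sq_nonneg (⟪p, ω⟫_ℝ + ⟪p, conj ω⟫_ℝ - 0.5),
    sq_nonneg (⟪p, ω⟫_ℝ - ⟪p, conj ω⟫_ℝ - 0.6264)]

theorem inner_bounds_of_norm_sub_sixthRoot_mul_le (hS : RotationClosed S 1.022) (h1 : 1 ∈ S)
    (hqS : q ∈ S) (hb : ‖b - ω‖ ≤ 0.04) (h1b : 1 ≤ 1.022 * ‖1 - b‖) (hbp : ‖p - b‖ ≤ ‖p‖)
    (hq : ‖q - ω * p‖ ≤ 0.0409) :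
    ‖p - 1‖ ≤ 0.458 ∧ -0.04 ≤ ⟪p - 1, ω⟫_ℝ ∧ ‖p - 1‖ ^ 2 + 2 * ⟪p - 1, ω⟫_ℝ ≤ 0.13 := by
  obtain ⟨u, rfl⟩ : ∃ u, p = u + 1 := ⟨p - 1, by ring⟩
  rw [add_sub_cancel_right]
  have hupper : ‖u‖ ^ 2 + 2 * ⟪u, ω⟫_ℝ ≤ 0.1298 := by
    have hnorm : ‖u + ω‖ ≤ 1.0629 := by
      have hrotate : ω * (u + ω) = (q - 1) - (q - ω * (u + 1)) := by
        linear_combination sixthRoot_sq - sixthRoot_add_conj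
      rw [← norm_sixthRoot_mul, hrotate]
      linarith [norm_sub_le (q - 1) (q - ω * (u + 1)), hS.norm_sub_le_of_mem hqS h1]
    have := pow_le_pow_left₀ (norm_nonneg _) hnorm 2
    rw [norm_add_sq_real, norm_sixthRoot] at this
    linarith
  have hlower : -0.0213 - 0.04 * ‖u‖ ≤ ⟪u, ω⟫_ℝ := by
    have huω : |⟪u, b - ω⟫_ℝ| ≤ ‖u‖ * 0.04 := (abs_real_inner_le_norm _ _).trans (by gcongr)
    have hcompare := pow_le_pow_left₀ (norm_nonneg _) hbp 2
    rw [add_sub_assoc, norm_add_sq_real, norm_add_sq_real, inner_sub_right, norm_one] at hcompare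
    rw [inner_sub_right] at huω
    nlinarith [abs_le.1 huω]
  have hnorm : ‖u‖ ≤ 0.458 := by nlinarith
  exact ⟨hnorm, by linarith, by linarith⟩

theorem exists_norm_sub_sixthRoot_sq_mul_le (hS : RotationClosed S 1.022) (h0 : 0 ∈ S)
    (h1 : 1 ∈ S) (hqS : q ∈ S) (hq : ‖q - ω * p‖ ≤ 0.0409) (hp1 : ‖p - 1‖ ≤ 0.458) :
    ∃ r ∈ S, ‖r - ω ^ 2 * (p - 1)‖ ≤ 0.0818 := by
  have hq1 := hS.norm_sub_le_of_mem hqS h1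
  have hsum : ∀ {x y : ℂ}, ‖x‖ ≤ 0.04 * ‖q - 1‖ → ‖y‖ ≤ 0.0409 → ‖x + y‖ ≤ 0.0818 :=
    fun {x y} hx hy => (norm_add_le x y).trans (by linarith)
  obtain ⟨r, hrS, hr | hr⟩ := hS.exists_nearRotation h1 hqS
  · have hcompose : r - ω ^ 2 * (p - 1) = (r - 1 - ω * (q - 1)) + ω * (q - ω * p) := by
      linear_combination sixthRoot_sq - sixthRoot_add_conj
    exact ⟨r, hrS, hcompose ▸ hsum hr (by rwa [norm_sixthRoot_mul])⟩
  -- Rotating `q` clockwise about `1` would bring it near `p + ω`, too far away from `0`.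
  exfalso
  have hr0 : ‖r‖ ≤ 1.022 := by simpa using hS.norm_sub_le_of_mem hrS h0
  have hsqrt : ‖1 + ω‖ ^ 2 = 3 := by
    rw [norm_add_sq_real, norm_one, norm_sixthRoot]
    norm_num [Complex.inner, sixthRoot_re]
  have hle : ‖1 + ω‖ ≤ 1.6 := by
    have hcompose : 1 + ω =
        r - (p - 1) - ((r - 1 - conj ω * (q - 1)) + conj ω * (q - ω * p)) := by
      linear_combination sixthRoot_add_conj - p * sixthRoot_mul_conj
    have hconj_mul : ‖conj ω * (q - ω * p)‖ ≤ 0.0409 := by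
      rwa [norm_mul, norm_conj, norm_sixthRoot, one_mul]
    rw [hcompose]
    linarith [hsum hr hconj_mul,
      norm_sub_le (r - (p - 1)) ((r - 1 - conj ω * (q - 1)) + conj ω * (q - ω * p)),
      norm_sub_le r (p - 1)]
  nlinarith [norm_nonneg (1 + ω)]

theorem norm_sub_one_le (hS : RotationClosed S 1.022) (h0 : 0 ∈ S) (h1 : 1 ∈ S) (hbS : b ∈ S)
    (hpS : p ∈ S) (hb : ‖b - ω‖ ≤ 0.04) (h1b : 1 ≤ 1.022 * ‖1 - b‖) (hpb : ‖p - 1‖ ≤ ‖p - b‖)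
    (hbp : ‖p - b‖ ≤ ‖p‖) : ‖p - 1‖ ≤ 0.23 := by
  obtain ⟨q, hqS, hq⟩ := hS.exists_norm_sub_sixthRoot_mul_le h0 hbS hpS hb (hpb.trans hbp) hpb
  obtain ⟨hp1, hPlower, hPupper⟩ :=
    hS.inner_bounds_of_norm_sub_sixthRoot_mul_le h1 hqS hb h1b hbp hq
  obtain ⟨r, hrS, hr⟩ := hS.exists_norm_sub_sixthRoot_sq_mul_le h0 h1 hqS hq hp1
  have hQlower : ‖p - 1‖ ^ 2 - 2 * ⟪p - 1, conj ω⟫_ℝ ≤ 0.309 := by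
    have hnorm : ‖p - 1 - conj ω‖ ≤ 1.144 := by
      have hrotate : ω * (ω * (p - 1 - conj ω)) =
          (b - ω) + (r - b) - (r - ω ^ 2 * (p - 1)) := by
        linear_combination -ω * sixthRoot_mul_conj
      rw [← norm_sixthRoot_mul, ← norm_sixthRoot_mul, hrotate]
      linarith [norm_sub_le ((b - ω) + (r - b)) (r - ω ^ 2 * (p - 1)),
        norm_add_le (b - ω) (r - b), hS.norm_sub_le_of_mem hrS hbS]
    have := pow_le_pow_left₀ (norm_nonneg _) hnorm 2
    rw [norm_sub_sq_real, norm_conj, norm_sixthRoot] at this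
    linarith
  have hQupper : ‖p - 1‖ ^ 2 + 2 * (⟪p - 1, ω⟫_ℝ + ⟪p - 1, conj ω⟫_ℝ) ≤ 0.0445 := by
    have := pow_le_pow_left₀ (norm_nonneg _) (hS.norm_sub_le_of_mem hpS h0) 2
    rw [sub_zero, ← sub_add_cancel p 1, norm_add_sq_real, norm_one] at this
    linarith [inner_add_inner_conj_sixthRoot (p - 1)]
  have hsq := norm_sq_eq_inner_sixthRoot (p - 1)
  generalize ⟪p - 1, ω⟫_ℝ = P at *
  generalize ⟪p - 1, conj ω⟫_ℝ = Q at *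
  refine le_of_sq_le_sq ?_ (by norm_num)
  nlinarith [sq_nonneg (P + Q), sq_nonneg (P - Q)]

end RotationClosed

namespace RotationClosed

variable {S : Set ℂ} {D : ℝ} {a b c p : ℂ}

theorem norm_sub_one_le_of_nearRotation (hS : RotationClosed S 1.022) (h0 : 0 ∈ S) (h1 : 1 ∈ S)
    (hbS : b ∈ S) (hpS : p ∈ S) (hb : NearRotation 0 1 b) (h1b : 1 ≤ 1.022 * ‖1 - b‖)
    (hpb : ‖p - 1‖ ≤ ‖p - b‖) (hbp : ‖p - b‖ ≤ ‖p‖) : ‖p - 1‖ ≤ 0.23 := by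
  simp only [NearRotation, sub_zero, mul_one, norm_one] at hb
  rcases hb with hb | hb
  · exact hS.norm_sub_one_le h0 h1 hbS hpS hb h1b hpb hbp
  · have hconj : ∀ x y : ℂ, ‖conj x - conj y‖ = ‖x - y‖ := fun x y => by rw [← map_sub, norm_conj]
    have hconj_one : ∀ x : ℂ, ‖conj x - 1‖ = ‖x - 1‖ := fun x => by rw [← hconj x 1, map_one]
    rw [← hconj_one]
    apply hS.preimage_conj.norm_sub_one_le (b := conj b)
    · rwa [Set.mem_preimage, map_zero]
    · rwa [Set.mem_preimage, map_one]
    · rwa [Set.mem_preimage, conj_conj]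
    · rwa [Set.mem_preimage, conj_conj]
    · rwa [← hconj, conj_conj]
    · rwa [norm_sub_rev, hconj_one, norm_sub_rev]
    · rwa [hconj_one, hconj]
    · rwa [hconj, norm_conj]

theorem norm_sub_le_of_norm_sub_le (hS : RotationClosed S D) (hD : 0 < D) (haS : a ∈ S)
    (hbS : b ∈ S) (hcS : c ∈ S) (hpS : p ∈ S) (hac : D ≤ 1.022 * ‖a - c‖)
    (hab : D ≤ 1.022 * ‖a - b‖) (hrot : NearRotation c a b) (hpb : ‖p - a‖ ≤ ‖p - b‖)
    (hbp : ‖p - b‖ ≤ ‖p - c‖) : ‖p - a‖ ≤ 0.23 * D := by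
  obtain ⟨c, k, rfl, rfl⟩ : ∃ c' k, c = c' + k * 0 ∧ a = c' + k * 1 :=
    ⟨c, a - c, by ring, by ring⟩
  have hscale : ∀ x y, ‖c + k * x - (c + k * y)‖ = ‖k‖ * ‖x - y‖ := fun x y => by
    rw [add_sub_add_left_eq_sub, ← mul_sub, norm_mul]
  have hkD : ‖k‖ ≤ D := by simpa using hS.norm_sub_le_of_mem haS hcS
  have hDk : D ≤ 1.022 * ‖k‖ := by simpa using hac
  have hkpos : 0 < ‖k‖ := by linarith
  have hk : k ≠ 0 := norm_pos_iff.1 hkpos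
  obtain ⟨b, rfl⟩ : ∃ b', b = c + k * b' := ⟨(b - c) / k, by field_simp; ring⟩
  obtain ⟨p, rfl⟩ : ∃ p', p = c + k * p' := ⟨(p - c) / k, by field_simp; ring⟩
  simp only [hscale] at *
  have hframe := (hS.preimage_affine hk c).mono ((div_le_iff₀ hkpos).2 hDk)
  have hp1 : ‖p - 1‖ ≤ 0.23 := by
    apply hframe.norm_sub_one_le_of_nearRotation hcS haS hbS hpS
      ((NearRotation.affine_iff hk c).1 hrot)
    · nlinarith
    · exact le_of_mul_le_mul_left hpb hkpos
    · simpa only [sub_zero] using le_of_mul_le_mul_left hbp hkpos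
  calc ‖k‖ * ‖p - 1‖ ≤ D * 0.23 := by gcongr
    _ = 0.23 * D := mul_comm _ _

theorem exists_norm_sub_le (hS : RotationClosed S D) (hD : 0 < D) {v : Fin 3 → ℂ}
    (hvS : ∀ i, v i ∈ S) (hv : NearlyEquilateral (v 0) (v 1) (v 2))
    (hside : ∀ i j, i ≠ j → D ≤ 1.022 * ‖v i - v j‖) (hpS : p ∈ S) :
    ∃ i, ‖p - v i‖ ≤ 0.23 * D := by
  set σ := Tuple.sort fun i => ‖p - v i‖
  have hmono : Monotone fun i => ‖p - v (σ i)‖ :=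
    Tuple.monotone_sort fun i => ‖p - v i‖
  have hN := isThreeGraph_nearlyEquilateral (V := ℂ) (P := ℂ)
  have hrot : NearRotation (v (σ 2)) (v (σ 0)) (v (σ 1)) :=
    (hN.swap_left (hN.swap_right (hN.perm hv σ))).nearRotation
  exact ⟨σ 0, hS.norm_sub_le_of_norm_sub_le hD (hvS _) (hvS _) (hvS _) hpS
    (hside _ _ (by simp)) (hside _ _ (by simp)) hrot (hmono (by decide)) (hmono (by decide))⟩

end RotationClosed

theorem Covered.rotationClosed {S : Set ℂ} (hS : Covered NearlyEquilateral S) {D : ℝ}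
    (hD : ∀ x ∈ S, ∀ y ∈ S, ‖x - y‖ ≤ D) : RotationClosed S D where
  norm_sub_le_of_mem hx hy := hD _ hx _ hy
  exists_nearRotation {x y} hx hy := by
    obtain rfl | hxy := eq_or_ne x y
    · exact ⟨x, hx, by simp [NearRotation]⟩
    · obtain ⟨z, hz, hxyz⟩ := hS x hx y hy hxy
      exact ⟨z, hz, hxyz.nearRotation⟩

theorem Covered.exists_diametral_triangle {S : Set ℂ} (hfin : S.Finite) (hnt : S.Nontrivial)
    (hcov : Covered NearlyEquilateral S) :
    ∃ D > 0, (∀ x ∈ S, ∀ y ∈ S, ‖x - y‖ ≤ D) ∧ ∃ v : Fin 3 → ℂ, (∀ i, v i ∈ S) ∧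
      NearlyEquilateral (v 0) (v 1) (v 2) ∧ ∀ i j, i ≠ j → D ≤ 1.022 * ‖v i - v j‖ := by
  obtain ⟨⟨x, y⟩, ⟨hx, hy⟩, hmax⟩ := (S ×ˢ S).exists_max_image (fun w => ‖w.1 - w.2‖)
    (hfin.prod hfin) (hnt.nonempty.prod hnt.nonempty)
  have hdiam : ∀ p ∈ S, ∀ q ∈ S, ‖p - q‖ ≤ ‖x - y‖ := fun p hp q hq => hmax (p, q) ⟨hp, hq⟩
  have hpos : 0 < ‖x - y‖ := by
    obtain ⟨p, hp, q, hq, hpq⟩ := hnt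
    exact (norm_sub_pos_iff.2 hpq).trans_le (hdiam p hp q hq)
  obtain ⟨z, hz, hxyz⟩ := hcov x hx y hy (norm_sub_pos_iff.1 hpos)
  have hN := isThreeGraph_nearlyEquilateral (V := ℂ) (P := ℂ)
  have hxz : ‖x - y‖ ≤ 1.022 * ‖x - z‖ := by
    simpa only [dist_eq] using (hN.swap_right hxyz).dist_le
  have hyz : ‖x - y‖ ≤ 1.022 * ‖y - z‖ := by
    simpa only [dist_eq, norm_sub_rev y x] using (hN.swap_right (hN.swap_left hxyz)).dist_le
  refine ⟨‖x - y‖, hpos, hdiam, ![x, y, z], ?_, hxyz, ?_⟩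
  · simp [Fin.forall_fin_succ, hx, hy, hz]
  · have hxy : ‖x - y‖ ≤ 1.022 * ‖x - y‖ := by linarith
    simp [Fin.forall_fin_succ, hxz, hyz, hxy, norm_sub_rev y x, norm_sub_rev z x, norm_sub_rev z y]

theorem Covered.splits_nearlyEquilateral {S : Set ℂ} (hfin : S.Finite) (hnt : S.Nontrivial)
    (hcov : Covered NearlyEquilateral S) : Splits NearlyEquilateral S := by
  obtain ⟨D, hD, hdiam, v, hvS, hv, hside⟩ := hcov.exists_diametral_triangle hfin hnt
  have hnear : ∀ p, ∃ i, p ∈ S → ‖p - v i‖ ≤ 0.23 * D := fun p => by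
    by_cases hp : p ∈ S
    · obtain ⟨i, hi⟩ := (hcov.rotationClosed hdiam).exists_norm_sub_le hD hvS hv hside hp
      exact ⟨i, fun _ => hi⟩
    · exact ⟨0, fun h => absurd h hp⟩
  choose g hg using hnear
  refine ⟨g, fun i => ⟨v i, hvS i, ?_⟩, fun x hx y hy z hz hxyz hgxy => ?_⟩ <;> by_contra hne
  · linarith [hg _ (hvS i), hside _ _ (Ne.symm hne)]
  · have hxy : ‖x - y‖ ≤ 0.23 * D + 0.23 * D :=
      (norm_sub_le_norm_sub_add_norm_sub x (v (g x)) y).trans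
        (add_le_add (hg x hx) (by rw [norm_sub_rev, hgxy]; exact hg y hy))
    have hxz : ‖x - z‖ ≤ 1.022 * ‖x - y‖ := by simpa only [dist_eq] using hxyz.dist_le
    have hcentres : ‖v (g x) - v (g z)‖ ≤ 0.23 * D + ‖x - z‖ + 0.23 * D := by
      linarith [norm_sub_le_norm_sub_add_norm_sub (v (g x)) x (v (g z)),
        norm_sub_le_norm_sub_add_norm_sub x z (v (g z)), norm_sub_rev (v (g x)) x, hg x hx,
        hg z hz]
    linarith [hside _ _ hne]

end Rotation

section UpperBound

open Real

theorem nearlyEquilateral_map_iff {V P V' P' : Type*} [NormedAddCommGroup V]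
    [InnerProductSpace ℝ V] [MetricSpace P] [NormedAddTorsor V P] [NormedAddCommGroup V']
    [InnerProductSpace ℝ V'] [MetricSpace P'] [NormedAddTorsor V' P'] (f : P →ᵃⁱ[ℝ] P')
    {x y z : P} : NearlyEquilateral (f x) (f y) (f z) ↔ NearlyEquilateral x y z := by
  constructor <;> intro h
  · exact ⟨f.angle_map y x z ▸ h.fst, f.angle_map x y z ▸ h.snd, f.angle_map x z y ▸ h.thd⟩
  · exact ⟨(f.angle_map y x z).symm ▸ h.fst, (f.angle_map x y z).symm ▸ h.snd,
      (f.angle_map x z y).symm ▸ h.thd⟩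

theorem tripleCount_nearlyEquilateral_le {h : ℕ → ℕ} (hrec : HRec h) (s : Multiset Plane) :
    tripleCount NearlyEquilateral s s s ≤ 6 * h s.card := by
  let f : Plane →ᵃⁱ[ℝ] ℂ := Complex.orthonormalBasisOneI.repr.symm.toLinearIsometry.toAffineIsometry
  have hpull : tripleCount NearlyEquilateral s s s =
      tripleCount NearlyEquilateral (s.map f) (s.map f) (s.map f) := by
    simp only [tripleCount_map, nearlyEquilateral_map_iff]
  rw [hpull, ← s.card_map f]
  exact isThreeGraph_nearlyEquilateral.tripleCount_self_le
    (fun S hfin hnt hcov => hcov.splits_nearlyEquilateral hfin hnt) hrec _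

theorem triAngle_eq_pi_div_three {T : Fin 3 → Plane} (hT : IsTriangle T)
    (h₀₁ : dist (T 0) (T 1) = dist (T 1) (T 2)) (h₁₂ : dist (T 1) (T 2) = dist (T 2) (T 0))
    (i : Fin 3) : triAngle T i = π / 3 := by
  let s : Affine.Simplex ℝ Plane 2 := ⟨T, affineIndependent_iff_not_collinear.2 hT⟩
  have hs : s.Equilateral := Affine.Triangle.equilateral_iff_dist_01_eq_02_and_dist_01_eq_12.2
    ⟨by rw [dist_comm (s.points 0) (s.points 2)]; exact h₀₁.trans h₁₂, h₀₁⟩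
  have hne : ∀ i : Fin 3, i + 1 ≠ i ∧ i + 1 ≠ i + 2 ∧ i ≠ i + 2 := by decide
  exact hs.angle_eq_pi_div_three (hne i).1 (hne i).2.1 (hne i).2.2

open Classical in
/-- The `3`-element subsets of `P` counted by `simCount`, as a finite set. -/
def similarTriples (ε : ℝ) (T : Fin 3 → Plane) (P : Finset Plane) : Finset (Finset Plane) :=
  (P.powersetCard 3).filter (FormsSimilar ε T)

variable {ε : ℝ} {T : Fin 3 → Plane} {P S : Finset Plane}

theorem mem_similarTriples :
    S ∈ similarTriples ε T P ↔ S ⊆ P ∧ S.card = 3 ∧ FormsSimilar ε T S := by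
  simp only [similarTriples, Finset.mem_filter, Finset.mem_powersetCard, and_assoc]

theorem simCount_eq_card_similarTriples (ε : ℝ) (T : Fin 3 → Plane) (P : Finset Plane) :
    simCount ε T P = (similarTriples ε T P).card := by
  rw [simCount, ← Set.ncard_coe_finset]
  congr 1
  ext S
  exact mem_similarTriples.symm

theorem FormsSimilar.exists_nearlyEquilateral (hS : FormsSimilar ε T S) (hε : ε ≤ π / 180)
    (hT : ∀ i, triAngle T i = π / 3) :
    ∃ v : Fin 3 → Plane, (S : Set Plane) = Set.range v ∧
      NearlyEquilateral (v 0) (v 1) (v 2) := by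
  obtain ⟨v, hv, -, σ, hσ⟩ := hS
  have hangle : ∀ i, |triAngle v i - π / 3| < π / 180 := fun i =>
    hT (σ i) ▸ (hσ i).trans_le hε
  exact ⟨v, hv, hangle 0, angle_comm (v 2) (v 1) (v 0) ▸ hangle 1, hangle 2⟩

theorem simCount_le {h : ℕ → ℕ} (hrec : HRec h) (hε : ε ≤ π / 180)
    (hT : ∀ i, triAngle T i = π / 3) (P : Finset Plane) : simCount ε T P ≤ h P.card := by
  have hcount : 6 * simCount ε T P ≤ tripleCount NearlyEquilateral P.val P.val P.val := by
    rw [simCount_eq_card_similarTriples]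
    refine isThreeGraph_nearlyEquilateral.six_mul_card_le_tripleCount fun S hS => ?_
    rw [mem_similarTriples] at hS
    exact ⟨hS.1, hS.2.2.exists_nearlyEquilateral hε hT⟩
  exact Nat.le_of_mul_le_mul_left (hcount.trans (tripleCount_nearlyEquilateral_le hrec P.val))
    (by norm_num)

end UpperBound

section LowerBound

open AffineMap Filter Topology Function

theorem injOn_image_piFinset {ι X : Type*} [Fintype ι] [DecidableEq ι] [DecidableEq X]
    {P : ι → Finset X} (hP : Pairwise (Disjoint on P)) :
    Set.InjOn (fun v => Finset.univ.image v) (Fintype.piFinset P : Set (ι → X)) := by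
  intro v hv w hw (heq : Finset.univ.image v = Finset.univ.image w)
  simp only [Finset.mem_coe, Fintype.mem_piFinset] at hv hw
  ext i
  have hmem : v i ∈ Finset.univ.image w := heq ▸ Finset.mem_image_of_mem v (Finset.mem_univ i)
  obtain ⟨j, -, hj⟩ := Finset.mem_image.1 hmem
  obtain rfl : i = j := hP.eq (Finset.not_disjoint_iff.2 ⟨v i, hv i, hj ▸ hw j⟩)
  exact hj.symm

variable {ε : ℝ} {T p : Fin 3 → Plane} {S Q : Finset Plane}

theorem prod_card_add_sum_simCount_le [DecidableEq Plane] {P : Fin 3 → Finset Plane}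
    (hP : Pairwise (Disjoint on P))
    (hsim : ∀ v : Fin 3 → Plane, (∀ i, v i ∈ P i) → FormsSimilar ε T (Finset.univ.image v)) :
    ∏ i, (P i).card + ∑ i, simCount ε T (P i) ≤ simCount ε T (Finset.univ.biUnion P) := by
  have hindex : ∀ {i j x}, x ∈ P i → x ∈ P j → i = j := fun hi hj =>
    hP.eq (Finset.not_disjoint_iff.2 ⟨_, hi, hj⟩)
  set transversals := (Fintype.piFinset P).image fun v => Finset.univ.image v with htransversals
  set internal := Finset.univ.biUnion fun i => similarTriples ε T (P i) with hinternal
  have hcard_transversals : transversals.card = ∏ i, (P i).card := by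
    rw [Finset.card_image_of_injOn (injOn_image_piFinset hP), Fintype.card_piFinset]
  have hcard_internal : internal.card = ∑ i, simCount ε T (P i) := by
    simp only [simCount_eq_card_similarTriples]
    refine Finset.card_biUnion fun i _ j _ hij => Finset.disjoint_left.2 fun S hSi hSj => hij ?_
    rw [mem_similarTriples] at hSi hSj
    obtain ⟨x, hx⟩ : S.Nonempty := Finset.card_pos.1 (by lia)
    exact hindex (hSi.1 hx) (hSj.1 hx)
  have hdisj : Disjoint transversals internal := by
    simp only [htransversals, hinternal, Finset.disjoint_left, Finset.forall_mem_image,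
      Fintype.mem_piFinset, Finset.mem_biUnion, mem_similarTriples, not_exists, not_and]
    intro v hv i _ hsub
    have hnext := hindex (hsub (Finset.mem_image_of_mem v (Finset.mem_univ (i + 1)))) (hv (i + 1))
    simp at hnext
  rw [← hcard_transversals, ← hcard_internal, ← Finset.card_union_of_disjoint hdisj,
    simCount_eq_card_similarTriples]
  refine Finset.card_le_card (Finset.union_subset ?_ ?_) <;> intro S hS
  · obtain ⟨v, hv, rfl⟩ := Finset.mem_image.1 hS
    rw [Fintype.mem_piFinset] at hv
    have hinj : Injective v := fun i j hij => hindex (hv i) (hij ▸ hv j)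
    refine mem_similarTriples.2 ⟨?_, by simp [Finset.card_image_of_injective _ hinj], hsim v hv⟩
    exact Finset.image_subset_iff.2 fun i hi => Finset.mem_biUnion.2 ⟨i, hi, hv i⟩
  · obtain ⟨i, hi, hSi⟩ := Finset.mem_biUnion.1 hS
    rw [mem_similarTriples] at hSi ⊢
    exact ⟨hSi.1.trans (Finset.subset_biUnion_of_mem P hi), hSi.2⟩

namespace IsTriangle

theorem affineIndependent (hp : IsTriangle p) : AffineIndependent ℝ p :=
  affineIndependent_iff_not_collinear.2 hp

theorem comp_homothety (hp : IsTriangle p) (c : Plane) {s : ℝ} (hs : s ≠ 0) :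
    IsTriangle (homothety c s ∘ p) :=
  affineIndependent_iff_not_collinear.1
    (hp.affineIndependent.map' (homothety c s) (homothety_injective c hs))

theorem continuousAt_triAngle (hp : IsTriangle p) (i : Fin 3) :
    ContinuousAt (fun q => triAngle q i) p := by
  have hne : ∀ i : Fin 3, i + 1 ≠ i ∧ i + 2 ≠ i := by decide
  have hinj := hp.affineIndependent.injective
  exact (continuousAt_angle (x := (p (i + 1), p i, p (i + 2))) (hinj.ne (hne i).1)
    (hinj.ne (hne i).2)).comp (f := fun q : Fin 3 → Plane => (q (i + 1), q i, q (i + 2)))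
    (by fun_prop)

theorem eventually_epsSimilar (hT : IsTriangle T) (hε : 0 < ε) :
    ∀ᶠ p in 𝓝 T, IsTriangle p ∧ EpsSimilar ε p T := by
  have hopen : ∀ᶠ p in 𝓝 T, AffineIndependent ℝ p :=
    isOpen_setOfPred_affineIndependent.mem_nhds hT.affineIndependent
  have hangle : ∀ᶠ p in 𝓝 T, ∀ i, dist (triAngle p i) (triAngle T i) < ε :=
    eventually_all.2 fun i => Metric.continuousAt_iff'.1 (hT.continuousAt_triAngle i) ε hε
  filter_upwards [hopen, hangle] with p hp hclose
  exact ⟨affineIndependent_iff_not_collinear.1 hp, Equiv.refl _, hclose⟩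

theorem exists_homothety_epsSimilar (hT : IsTriangle T) (hε : 0 < ε) (R : Finset Plane) :
    ∃ s : ℝ, s ≠ 0 ∧ ∀ q : Fin 3 → Plane, (∀ i, q i ∈ R) →
      IsTriangle (fun i => homothety (T i) s (q i)) ∧
      EpsSimilar ε (fun i => homothety (T i) s (q i)) T := by
  have htendsto : ∀ q : Fin 3 → Plane,
      Tendsto (fun (s : ℝ) i => homothety (T i) s (q i)) (𝓝 0) (𝓝 T) := fun q => by
    have hcont : Continuous fun (s : ℝ) i => homothety (T i) s (q i) := by
      simp only [homothety_apply]
      fun_prop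
    simpa using hcont.tendsto 0
  have hnear : ∀ᶠ s : ℝ in 𝓝 0, ∀ q ∈ Fintype.piFinset fun _ : Fin 3 => R,
      IsTriangle (fun i => homothety (T i) s (q i)) ∧
      EpsSimilar ε (fun i => homothety (T i) s (q i)) T :=
    (eventually_all_finset _).2 fun q _ => (htendsto q).eventually (hT.eventually_epsSimilar hε)
  obtain ⟨s, hs, hs0⟩ :=
    ((hnear.filter_mono nhdsWithin_le_nhds).and (self_mem_nhdsWithin (s := {0}ᶜ))).exists
  exact ⟨s, hs0, fun q hq => hs q (Fintype.mem_piFinset.2 hq)⟩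

end IsTriangle

theorem FormsSimilar.image_homothety [DecidableEq Plane] (hS : FormsSimilar ε T S) (c : Plane)
    {s : ℝ} (hs : s ≠ 0) : FormsSimilar ε T (S.image (homothety c s)) := by
  obtain ⟨p, hp, htri, σ, hσ⟩ := hS
  refine ⟨homothety c s ∘ p, by rw [Finset.coe_image, hp, Set.range_comp],
    htri.comp_homothety c hs, σ, fun i => ?_⟩
  simpa only [triAngle, comp_apply, angle_homothety _ _ _ _ hs] using hσ i

theorem simCount_le_simCount_image_homothety [DecidableEq Plane] (c : Plane) {s : ℝ}
    (hs : s ≠ 0) : simCount ε T Q ≤ simCount ε T (Q.image (homothety c s)) := by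
  have hinj := homothety_injective c hs
  rw [simCount_eq_card_similarTriples, simCount_eq_card_similarTriples]
  refine Finset.card_le_card_of_injOn (Finset.image (homothety c s)) (fun S hS => ?_)
    (Finset.image_injective hinj).injOn
  rw [Finset.mem_coe, mem_similarTriples] at hS ⊢
  exact ⟨Finset.image_subset_image hS.1, (Finset.card_image_of_injective S hinj).trans hS.2.1,
    hS.2.2.image_homothety c hs⟩

theorem IsTriangle.exists_prod_card_add_sum_simCount_le (hT : IsTriangle T) (hε : 0 < ε)
    (Q : Fin 3 → Finset Plane) :
    ∃ P : Finset Plane, P.card = ∑ i, (Q i).card ∧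
      ∏ i, (Q i).card + ∑ i, simCount ε T (Q i) ≤ simCount ε T P := by
  classical
  obtain ⟨s, hs, hsim⟩ := hT.exists_homothety_epsSimilar hε (Finset.univ.biUnion Q)
  have hmem : ∀ {i x}, x ∈ Q i → x ∈ Finset.univ.biUnion Q := fun hx =>
    Finset.mem_biUnion.2 ⟨_, Finset.mem_univ _, hx⟩
  set P := fun i => (Q i).image (homothety (T i) s) with hPdef
  have hcard : ∀ i, (P i).card = (Q i).card := fun i =>
    Finset.card_image_of_injective _ (homothety_injective _ hs)
  have hdisj : Pairwise (Disjoint on P) := by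
    refine fun i j hij => Finset.disjoint_left.2 fun z hzi hzj => hij ?_
    obtain ⟨x, hx, rfl⟩ := Finset.mem_image.1 hzi
    obtain ⟨y, hy, hxy⟩ := Finset.mem_image.1 hzj
    have htri := (hsim (update (fun _ => x) j y) fun k => by
      rcases eq_or_ne k j with rfl | hk
      · simpa using hmem hy
      · simpa [hk] using hmem hx).1
    exact htri.affineIndependent.injective (by simp [hij, hxy])
  have htransversal : ∀ v : Fin 3 → Plane, (∀ i, v i ∈ P i) →
      FormsSimilar ε T (Finset.univ.image v) := fun v hv => by
    simp only [hPdef, Finset.mem_image] at hv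
    choose q hq hqv using hv
    obtain rfl : (fun i => homothety (T i) s (q i)) = v := funext hqv
    exact ⟨_, by simp, hsim q fun i => hmem (hq i)⟩
  refine ⟨Finset.univ.biUnion P, ?_, le_trans ?_ (prod_card_add_sum_simCount_le hdisj htransversal)⟩
  · simp only [Finset.card_biUnion fun _ _ _ _ hij => hdisj hij, hcard]
  · simp only [hcard]
    gcongr
    exact simCount_le_simCount_image_homothety _ hs

theorem IsTriangle.exists_le_simCount (hT : IsTriangle T) (hε : 0 < ε) {h : ℕ → ℕ}
    (hrec : HRec h) (n : ℕ) : ∃ P : Finset Plane, P.card = n ∧ h n ≤ simCount ε T P := by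
  induction n using Nat.strong_induction_on with
  | _ n ih =>
  rcases lt_or_ge n 3 with hn | hn
  · have : Infinite Plane := Module.Free.infinite ℝ Plane
    obtain ⟨P, hP⟩ := Infinite.exists_subset_card_eq Plane n
    exact ⟨P, hP, (hrec.eq_zero_of_lt_three hn).trans_le (Nat.zero_le _)⟩
  · obtain ⟨a, b, c, hsum, ha, hb, hc, heq⟩ := hrec.exists_eq_mul_add_add_add hn
    obtain ⟨A, rfl, hA⟩ := ih a ha
    obtain ⟨B, rfl, hB⟩ := ih b hb
    obtain ⟨C, rfl, hC⟩ := ih c hc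
    obtain ⟨P, hcard, hle⟩ := hT.exists_prod_card_add_sum_simCount_le hε ![A, B, C]
    simp only [Fin.sum_univ_three, Fin.prod_univ_three, Matrix.cons_val] at hcard hle
    exact ⟨P, hcard.trans hsum, by lia⟩

end LowerBound

theorem hGeo_eq {h : ℕ → ℕ} (hrec : HRec h) {T : Fin 3 → Plane} (hT : IsTriangle T)
    (hangle : ∀ i, triAngle T i = Real.pi / 3) {ε : ℝ} (hε : 0 < ε) (hε' : ε ≤ Real.pi / 180)
    (n : ℕ) : hGeo n T ε = h n := by
  obtain ⟨P, hcard, hle⟩ := hT.exists_le_simCount hε hrec n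
  have hbound : h n ∈ upperBounds {m | ∃ P : Finset Plane, P.card = n ∧ simCount ε T P = m} := by
    rintro _ ⟨P, rfl, rfl⟩
    exact simCount_le hrec hε' hangle P
  exact le_antisymm (csSup_le ⟨_, P, hcard, rfl⟩ hbound)
    (hle.trans (le_csSup ⟨_, hbound⟩ ⟨P, hcard, rfl⟩))

/-- For the equilateral triangle `T` there is `ε₀ ≥ π/180` such that for all
`0 < ε < ε₀` and all `n`, `h(n, T, ε) = h(n)`; in particular
`h(n, T, ε) = (n³ - n)/24` when `n` is a power of `3`. -/
theorem stmt_4 (h : ℕ → ℕ) (hrec : HRec h)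
    (T : Fin 3 → Plane) (hT : IsTriangle T)
    (heq1 : dist (T 0) (T 1) = dist (T 1) (T 2))
    (heq2 : dist (T 1) (T 2) = dist (T 2) (T 0)) :
    ∃ ε₀ : ℝ, Real.pi / 180 ≤ ε₀ ∧ ∀ ε : ℝ, 0 < ε → ε < ε₀ →
      (∀ n : ℕ, hGeo n T ε = h n) ∧
      (∀ n : ℕ, (∃ k : ℕ, n = 3 ^ k) → 24 * hGeo n T ε = n ^ 3 - n) := by
  refine ⟨Real.pi / 180, le_rfl, fun ε hε hε' => ?_⟩
  have heq : ∀ n, hGeo n T ε = h n :=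
    hGeo_eq hrec hT (triAngle_eq_pi_div_three hT heq1 heq2) hε hε'.le
  refine ⟨heq, ?_⟩
  rintro _ ⟨k, rfl⟩
  rw [heq]
  exact Nat.eq_sub_of_add_eq (hrec.mul_three_pow_add k)

end
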